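/- A graph G is a quasi-banana graph if and only if G is gonality-tight and there exists a vertex v ∈ V(G) such that the divisor D = v + Σ_{w∈V(G)} w realises the second gonality of G (i.e. D has rank 2 and degree gon_2(G)). -/

import Mathlib

open Finset

variable {V : Type*} [Fintype V] [DecidableEq V]

/-- A finite loopless multigraph on vertex type `V`, given by symmetric edge multiplicities. -/
structure Multigraph (V : Type*) [Fintype V] [DecidableEq V] where
  mult : V → V → ℕ
  symm : ∀ u v, mult u v = mult v u
  loopless : ∀ v, mult v v = 0

namespace Multigraph

def Adj (G : Multigraph V) (u v : V) : Prop := 0 < G.mult u v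

/-- A graph is connected. -/
def Connected (G : Multigraph V) : Prop :=
  Nonempty V ∧ ∀ u v : V, Relation.ReflTransGen G.Adj u v

/-- Valence of a vertex. -/
def valence (G : Multigraph V) (v : V) : ℕ := ∑ u, G.mult v u

/-- The Laplacian applied to an integer-valued function on the vertices. -/
def laplacian (G : Multigraph V) (f : V → ℤ) : V → ℤ :=
  fun w => ∑ u, (G.mult w u : ℤ) * (f w - f u)

/-- Degree of a divisor. -/
def degree (D : V → ℤ) : ℤ := ∑ v, D v

/-- A divisor is effective if all coefficients are nonnegative. -/
def Effective (D : V → ℤ) : Prop := ∀ v, 0 ≤ D v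

/-- Linear equivalence of divisors: they differ by a sequence of chip-firing moves,
equivalently by a Laplacian of an integer function. -/
def LinEquiv (G : Multigraph V) (D D' : V → ℤ) : Prop :=
  ∃ f : V → ℤ, D' = D - G.laplacian f

/-- A divisor is winnable if it is linearly equivalent to an effective divisor. -/
def Winnable (G : Multigraph V) (D : V → ℤ) : Prop :=
  ∃ E : V → ℤ, Effective E ∧ G.LinEquiv D E

/-- The Baker–Norine rank of a divisor: the largest `r` such that `D - E` is winnable for
every effective divisor `E` of degree `r` (the defining set contains all negative integers,
and its supremum is `-1` precisely when `D` itself is not winnable). -/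
noncomputable def rank (G : Multigraph V) (D : V → ℤ) : ℤ :=
  sSup {r : ℤ | ∀ E : V → ℤ, Effective E → degree E = r → G.Winnable (fun w => D w - E w)}

/-- The `k`-th gonality of a graph: the smallest degree of a divisor of rank `k`. -/
noncomputable def gonality (G : Multigraph V) (k : ℤ) : ℤ :=
  sInf {d : ℤ | ∃ D : V → ℤ, G.rank D = k ∧ degree D = d}

/-- A graph is gonality-tight if its second gonality exceeds its first by exactly 1. -/
def GonalityTight (G : Multigraph V) : Prop :=
  G.gonality 2 = G.gonality 1 + 1

/-- A divisor realises the `k`-th gonality if it has rank `k` and degree `gon_k(G)`. -/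
def Realises (G : Multigraph V) (k : ℤ) (D : V → ℤ) : Prop :=
  G.rank D = k ∧ degree D = G.gonality k

/-- A divisor is `v`-reduced: nonnegative away from `v`, and set-firing any nonempty set of
vertices not containing `v` creates a negative coefficient inside the set. -/
def Reduced (G : Multigraph V) (v : V) (D : V → ℤ) : Prop :=
  (∀ w, w ≠ v → 0 ≤ D w) ∧
    ∀ U : Finset V, U.Nonempty → v ∉ U →
      ∃ w ∈ U, D w - ∑ u ∈ Uᶜ, (G.mult w u : ℤ) < 0

/-- The genus (first Betti number) of a graph: `|E| - |V| + 1`. -/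
def genus (G : Multigraph V) : ℤ :=
  ((∑ u, ∑ v, G.mult u v : ℕ) : ℤ) / 2 - Fintype.card V + 1

/-- The canonical divisor of a graph. -/
def canonical (G : Multigraph V) : V → ℤ :=
  fun w => (G.valence w : ℤ) - 2

/-- The subgraph induced on a set `S` of vertices (with all edges among `S`). -/
def induce (G : Multigraph V) (S : Finset V) : Multigraph {x // x ∈ S} where
  mult a b := G.mult a b
  symm a b := G.symm a b
  loopless a := G.loopless a

/-- `G.SeparatedBy u w v` means every path from `w` to `v` passes through `u`. -/
def SeparatedBy (G : Multigraph V) (u w v : V) : Prop :=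
  ¬ Relation.ReflTransGen (fun x y => G.Adj x y ∧ x ≠ u ∧ y ≠ u) w v

end Multigraph

/-- Size of the `i`-th level of a quasi-banana graph: level `0` has a single vertex. -/
def qbSize (q : ℕ → ℕ) (i : ℕ) : ℕ := if i = 0 then 1 else q i

/-- `ℓ` is a quasi-banana labelling of `G` exhibiting `G ≅ QB_m(q_1, …, q_m)`:
`ℓ` is a bijection onto the pairs `(i, j)` with `i ≤ m`, `1 ≤ j ≤ qbSize q i`
(vertex `u_{i,j}` is the vertex labelled `(i,j)`), and the edge multiplicities are:
one edge between distinct vertices of the same level, `(∑_{k=1}^{i} q_k) + 2` edges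
between `u_{i,1}` and each `u_{i+1,j}`, and no other edges. -/
def Multigraph.IsQBLabelling (G : Multigraph V) (m : ℕ) (q : ℕ → ℕ) (ℓ : V → ℕ × ℕ) : Prop :=
  (∀ i, 1 ≤ i → i ≤ m → 0 < q i) ∧
  Function.Injective ℓ ∧
  (∀ v : V, (ℓ v).1 ≤ m ∧ 1 ≤ (ℓ v).2 ∧ (ℓ v).2 ≤ qbSize q (ℓ v).1) ∧
  (∀ i j : ℕ, i ≤ m → 1 ≤ j → j ≤ qbSize q i → ∃ v, ℓ v = (i, j)) ∧
  (∀ v w : V, v ≠ w → G.mult v w =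
    if (ℓ v).1 = (ℓ w).1 then 1
    else if (ℓ v).1 + 1 = (ℓ w).1 ∧ (ℓ v).2 = 1 then (∑ i ∈ Finset.Icc 1 (ℓ v).1, q i) + 2
    else if (ℓ w).1 + 1 = (ℓ v).1 ∧ (ℓ w).2 = 1 then (∑ i ∈ Finset.Icc 1 (ℓ w).1, q i) + 2
    else 0)

/-- A graph is a quasi-banana graph if it is isomorphic to some `QB_m(N)`. -/
def Multigraph.IsQuasiBanana (G : Multigraph V) : Prop :=
  ∃ (m : ℕ) (q : ℕ → ℕ) (ℓ : V → ℕ × ℕ), G.IsQBLabelling m q ℓ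

/-- The graph obtained from `G'` by attaching a complete graph `K_n`: `n` new vertices
pairwise joined by exactly one edge, each joined to `v` by exactly `k+1` edges. -/
def attachComplete (G' : Multigraph V) (v : V) (k n : ℕ) : Multigraph (V ⊕ Fin n) where
  mult x y :=
    match x, y with
    | Sum.inl a, Sum.inl b => G'.mult a b
    | Sum.inl a, Sum.inr _ => if a = v then k + 1 else 0
    | Sum.inr _, Sum.inl b => if b = v then k + 1 else 0
    | Sum.inr i, Sum.inr j => if i = j then 0 else 1
  symm := by
    rintro (a | i) (b | j)
    · exact G'.symm a b
    · rfl
    · rfl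
    · by_cases h : i = j
      · simp [h]
      · simp [h, Ne.symm h]
  loopless := by
    rintro (a | i)
    · exact G'.loopless a
    · simp

/-!
The divisor `v + ∑ w` is the pile `pile {v} v`. Along a quasi-banana graph it is equivalent to the
pile at every vertex of every level, so it has rank at least two. A divisor of rank at least one is
followed from the last level back to level `0` through its reduced forms: as soon as the reduced
divisor leaves some vertex of the current level without a chip, bringing one there costs so much
that the degree is at least the number of vertices. Hence the first gonality is that number.

Conversely, let the first gonality be the number of vertices and let `pile {v} v` have rank at least
two. If this divisor were equivalent to effective divisors `E ≥ 2a + b` and `F ≥ a + 2b`, then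
subtracting `a + b` would leave a divisor of rank at least one and of degree one less than the
number of vertices. This exclusion forces every legal move that takes all chips away from a pile to
send them to a single vertex, forces any two such vertices to be joined by exactly one edge, and
leaves the rest of the graph attached to one of them. These vertices form the next level.
-/

namespace Multigraph

section Degree

lemma effective_single {α : Type*} [DecidableEq α] (x : α) {c : ℤ} (hc : 0 ≤ c) :
    Effective (Pi.single x c) :=
  fun w => (Pi.single_nonneg.2 hc : 0 ≤ (Pi.single x c : α → ℤ)) w

lemma Effective.sub_single {α : Type*} [DecidableEq α] {E : α → ℤ} (hE : Effective E) {x : α}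
    {c : ℤ} (hx : c ≤ E x) : Effective (E - Pi.single x c) := by
  intro w
  obtain rfl | hw := eq_or_ne w x
  · simpa using hx
  · simpa [hw] using hE w

variable {α : Type*} [Fintype α]

lemma degree_add (D E : α → ℤ) : degree (D + E) = degree D + degree E :=
  sum_add_distrib

lemma degree_sub (D E : α → ℤ) : degree (D - E) = degree D - degree E :=
  sum_sub_distrib D E

lemma degree_mono {D E : α → ℤ} (h : D ≤ E) : degree D ≤ degree E :=
  sum_le_sum fun w _ => h w

lemma Effective.degree_nonneg {E : α → ℤ} (hE : Effective E) : 0 ≤ degree E :=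
  sum_nonneg fun w _ => hE w

lemma Effective.apply_le_degree {E : α → ℤ} (hE : Effective E) (x : α) : E x ≤ degree E :=
  single_le_sum (f := E) (fun w _ => hE w) (mem_univ x)

variable [DecidableEq α]

lemma degree_single (x : α) (c : ℤ) : degree (Pi.single x c) = c :=
  Fintype.sum_pi_single' x c

lemma eq_single_of_degree_eq {E : α → ℤ} (hE : Effective E) {x : α} {c : ℤ} (hx : c ≤ E x)
    (hd : degree E = c) : E = Pi.single x c := by
  have hsum : degree (E - Pi.single x c) = 0 := by rw [degree_sub, degree_single, hd, sub_self]
  have hzero := (Fintype.sum_eq_zero_iff_of_nonneg (hE.sub_single hx)).1 hsum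
  exact sub_eq_zero.1 hzero

end Degree

section MaxSet

variable {α : Type*} [Fintype α] {f : α → ℤ} {u w : α}

/-- The set of vertices at which `f` is maximal. -/
def maxSet (f : α → ℤ) : Finset α := {w | ∀ u, f u ≤ f w}

lemma mem_maxSet : w ∈ maxSet f ↔ ∀ u, f u ≤ f w := by
  simp [maxSet]

lemma maxSet_nonempty [Nonempty α] (f : α → ℤ) : (maxSet f).Nonempty := by
  obtain ⟨w, hw⟩ := Finite.exists_max f
  exact ⟨w, mem_maxSet.2 hw⟩

lemma lt_of_notMem_maxSet (hw : w ∈ maxSet f) (hu : u ∉ maxSet f) : f u < f w :=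
  lt_of_not_ge fun h => hu (mem_maxSet.2 fun x => (mem_maxSet.1 hw x).trans h)

end MaxSet

variable {G : Multigraph V}

section Laplacian

lemma laplacian_zero : G.laplacian 0 = 0 := by
  ext; simp [laplacian]

lemma laplacian_add (f g : V → ℤ) : G.laplacian (f + g) = G.laplacian f + G.laplacian g := by
  ext w
  simp only [laplacian, Pi.add_apply, ← sum_add_distrib]
  exact sum_congr rfl fun u _ => by ring

lemma laplacian_neg (f : V → ℤ) : G.laplacian (-f) = -G.laplacian f := by
  ext w
  simp only [laplacian, Pi.neg_apply, ← sum_neg_distrib]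
  exact sum_congr rfl fun u _ => by ring

lemma laplacian_sub (f g : V → ℤ) : G.laplacian (f - g) = G.laplacian f - G.laplacian g := by
  rw [sub_eq_add_neg, laplacian_add, laplacian_neg, ← sub_eq_add_neg]

lemma degree_laplacian (f : V → ℤ) : degree (G.laplacian f) = 0 := by
  have hanti : degree (G.laplacian f) = -degree (G.laplacian f) := by
    conv_lhs => simp only [degree, laplacian]
    rw [sum_comm]
    simp only [degree, laplacian, ← sum_neg_distrib]
    exact sum_congr rfl fun u _ => sum_congr rfl fun w _ => by rw [G.symm w u]; ring
  lia

lemma laplacian_le_laplacian {f g : V → ℤ} {w : V}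
    (h : ∀ u, G.mult w u ≠ 0 → f w - f u ≤ g w - g u) : G.laplacian f w ≤ G.laplacian g w := by
  refine sum_le_sum fun u _ => ?_
  by_cases hu : G.mult w u = 0
  · simp [hu]
  · exact mul_le_mul_of_nonneg_left (h u hu) (Int.natCast_nonneg _)

lemma laplacian_apply_eq_zero {f : V → ℤ} {w : V} (h : ∀ u, G.mult w u ≠ 0 → f u = f w) :
    G.laplacian f w = 0 := by
  refine sum_eq_zero fun u _ => ?_
  by_cases hu : G.mult w u = 0
  · simp [hu]
  · simp [h u hu]

end Laplacian

section LinearEquivalence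

variable {D D' E : V → ℤ}

lemma LinEquiv.refl (D : V → ℤ) : G.LinEquiv D D :=
  ⟨0, by rw [laplacian_zero, sub_zero]⟩

lemma LinEquiv.symm (h : G.LinEquiv D D') : G.LinEquiv D' D := by
  obtain ⟨f, rfl⟩ := h
  exact ⟨-f, by rw [laplacian_neg]; abel⟩

lemma LinEquiv.trans (h : G.LinEquiv D D') (h' : G.LinEquiv D' E) : G.LinEquiv D E := by
  obtain ⟨f, rfl⟩ := h
  obtain ⟨g, rfl⟩ := h'
  exact ⟨f + g, by rw [laplacian_add]; abel⟩

lemma LinEquiv.sub_right (h : G.LinEquiv D D') (E : V → ℤ) : G.LinEquiv (D - E) (D' - E) := by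
  obtain ⟨f, rfl⟩ := h
  exact ⟨f, by abel⟩

lemma LinEquiv.degree_eq (h : G.LinEquiv D D') : degree D = degree D' := by
  obtain ⟨f, rfl⟩ := h
  rw [degree_sub, degree_laplacian, sub_zero]

-- Both sides have the same degree, so agreement off one vertex forces agreement there too.
lemma linEquiv_of_forall_ne (hdeg : degree D = degree E) (f : V → ℤ) (x : V)
    (h : ∀ w ≠ x, D w - G.laplacian f w = E w) : G.LinEquiv D E := by
  refine ⟨f, funext fun w => ?_⟩
  obtain rfl | hw := eq_or_ne w x
  · have hsum : degree (D - G.laplacian f) = degree E := by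
      rw [degree_sub, degree_laplacian, sub_zero, hdeg]
    have hrest : ∑ u ∈ univ.erase w, (D - G.laplacian f) u = ∑ u ∈ univ.erase w, E u :=
      sum_congr rfl fun u hu => h u (ne_of_mem_erase hu)
    rw [degree, degree, ← add_sum_erase _ _ (mem_univ w), ← add_sum_erase _ E (mem_univ w),
      hrest] at hsum
    exact (add_right_cancel hsum).symm
  · exact (h w hw).symm

lemma winnable_iff : G.Winnable D ↔ ∃ f, G.laplacian f ≤ D := by
  constructor
  · rintro ⟨E, hE, f, rfl⟩
    exact ⟨f, sub_nonneg.1 hE⟩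
  · rintro ⟨f, hf⟩
    exact ⟨D - G.laplacian f, sub_nonneg.2 hf, f, rfl⟩

lemma Effective.winnable (hD : Effective D) : G.Winnable D :=
  ⟨D, hD, LinEquiv.refl D⟩

lemma LinEquiv.winnable (h : G.LinEquiv D D') (hD' : G.Winnable D') : G.Winnable D := by
  obtain ⟨E, hE, hE'⟩ := hD'
  exact ⟨E, hE, h.trans hE'⟩

lemma Winnable.mono (hD : G.Winnable D) (h : D ≤ D') : G.Winnable D' := by
  obtain ⟨f, hf⟩ := winnable_iff.1 hD
  exact winnable_iff.2 ⟨f, hf.trans h⟩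

lemma Winnable.degree_nonneg (hD : G.Winnable D) : 0 ≤ degree D := by
  obtain ⟨E, hE, hDE⟩ := hD
  exact hDE.degree_eq ▸ hE.degree_nonneg

end LinearEquivalence

section Firing

/-- The divisor removed from the graph by set-firing `U`, i.e. by firing every vertex of `U` once:
it is the outdegree of `U` at the vertices of `U`, and nonpositive elsewhere. -/
noncomputable def firing (G : Multigraph V) (U : Finset V) : V → ℤ :=
  G.laplacian ((U : Set V).indicator 1)

variable {U W : Finset V} {u w : V}

lemma firing_of_mem (hw : w ∈ U) : G.firing U w = ∑ u ∈ Uᶜ, (G.mult w u : ℤ) := by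
  rw [firing, laplacian, ← sum_compl_add_sum U, sum_eq_zero (s := U) fun u hu => ?_, add_zero]
  · exact sum_congr rfl fun u hu => by simp [hw, mem_compl.1 hu]
  · simp [hw, hu]

lemma firing_of_notMem (hw : w ∉ U) : G.firing U w = -∑ u ∈ U, (G.mult w u : ℤ) := by
  rw [firing, laplacian, ← sum_compl_add_sum U, sum_eq_zero (s := Uᶜ) fun u hu => ?_, zero_add,
    ← sum_neg_distrib]
  · exact sum_congr rfl fun u hu => by simp [hw, hu]
  · simp [hw, mem_compl.1 hu]

lemma sum_mult_le_firing (hw : w ∈ U) (hUW : Disjoint U W) :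
    ∑ u ∈ W, (G.mult w u : ℤ) ≤ G.firing U w := by
  rw [firing_of_mem hw]
  exact sum_le_sum_of_subset_of_nonneg (fun u hu => mem_compl.2 (disjoint_right.1 hUW hu))
    fun _ _ _ => Int.natCast_nonneg _

lemma mult_le_firing (hw : w ∈ U) (hu : u ∉ U) : (G.mult w u : ℤ) ≤ G.firing U w := by
  simpa using sum_mult_le_firing (W := {u}) (G := G) hw (disjoint_singleton_right.2 hu)

lemma firing_le_neg_mult (hw : w ∉ U) (hu : u ∈ U) : G.firing U w ≤ -(G.mult w u : ℤ) := by
  rw [firing_of_notMem hw, neg_le_neg_iff]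
  exact single_le_sum (f := fun u => (G.mult w u : ℤ)) (fun _ _ => Int.natCast_nonneg _) hu

lemma firing_nonpos (hw : w ∉ U) : G.firing U w ≤ 0 := by
  rw [firing_of_notMem hw]
  exact neg_nonpos.2 (sum_nonneg fun _ _ => Int.natCast_nonneg _)

lemma firing_anti (hw : w ∈ U) (hUW : U ⊆ W) : G.firing W w ≤ G.firing U w := by
  rw [firing_of_mem (hUW hw)]
  exact sum_mult_le_firing hw (disjoint_compl_right.mono_left hUW)

lemma firing_le_laplacian {f : V → ℤ} (hw : w ∈ U)
    (h : ∀ u, G.mult w u ≠ 0 → f u ≤ f w ∧ (u ∉ U → f u < f w)) :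
    G.firing U w ≤ G.laplacian f w := by
  refine laplacian_le_laplacian fun u hu => ?_
  obtain ⟨hle, hlt⟩ := h u hu
  by_cases huU : u ∈ U
  · simpa [hw, huU] using hle
  · simpa [hw, huU] using Int.le_sub_left_of_add_le (hlt huU)

variable {f : V → ℤ}

lemma firing_maxSet_le (hw : w ∈ maxSet f) : G.firing (maxSet f) w ≤ G.laplacian f w :=
  firing_le_laplacian hw fun u _ => ⟨mem_maxSet.1 hw u, lt_of_notMem_maxSet hw⟩

lemma laplacian_nonneg_of_mem_maxSet (hw : w ∈ maxSet f) : 0 ≤ G.laplacian f w :=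
  sum_nonneg fun u _ => mul_nonneg (Int.natCast_nonneg _) (sub_nonneg.2 (mem_maxSet.1 hw u))

end Firing

section Rank

variable [Nonempty V] {D D' E : V → ℤ} {r : ℤ}

lemma le_rank_iff :
    r ≤ G.rank D ↔ ∀ E, Effective E → degree E = r → G.Winnable (D - E) := by
  set R := {r : ℤ | ∀ E, Effective E → degree E = r → G.Winnable (D - E)}
  obtain ⟨x⟩ := ‹Nonempty V›
  have hbdd : BddAbove R := by
    refine ⟨max (degree D) 0, fun r hr => ?_⟩
    by_contra! hlt
    have hdeg := (hr _ (effective_single x ((le_max_right _ _).trans hlt.le))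
      (degree_single x r)).degree_nonneg
    rw [degree_sub, degree_single, sub_nonneg] at hdeg
    exact hdeg.not_gt ((le_max_left _ _).trans_lt hlt)
  have hneg : (-1 : ℤ) ∈ R := fun E hE hd => by
    have := hE.degree_nonneg
    lia
  have hmem : G.rank D ∈ R := Int.csSup_mem ⟨_, hneg⟩ hbdd
  refine ⟨fun hr E hE hd => ?_, fun h => le_csSup hbdd h⟩
  have hx : Effective (Pi.single x (G.rank D - r)) := effective_single x (sub_nonneg.2 hr)
  refine (hmem (E + Pi.single x (G.rank D - r)) (fun w => add_nonneg (hE w) (hx w))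
    (by rw [degree_add, degree_single, hd]; ring)).mono fun w => ?_
  exact sub_le_sub_left (le_add_of_nonneg_right (hx w)) (D w)

lemma LinEquiv.rank_le (h : G.LinEquiv D D') : G.rank D ≤ G.rank D' :=
  le_rank_iff.2 fun E hE hd => (h.symm.sub_right E).winnable (le_rank_iff.1 le_rfl E hE hd)

lemma le_rank_sub (hE : Effective E) (h : r ≤ G.rank D) : r - degree E ≤ G.rank (D - E) :=
  le_rank_iff.2 fun F hF hd => by
    rw [sub_sub]
    exact le_rank_iff.1 h _ (fun w => add_nonneg (hE w) (hF w)) (by rw [degree_add]; lia)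

lemma winnable_sub_single (hr : 0 ≤ r) (h : r ≤ G.rank D) (x : V) :
    G.Winnable (D - Pi.single x r) :=
  le_rank_iff.1 h _ (effective_single x hr) (degree_single x r)

lemma winnable_of_le_rank (hr : 0 ≤ r) (h : r ≤ G.rank D) : G.Winnable D := by
  obtain ⟨x⟩ := ‹Nonempty V›
  exact (winnable_sub_single hr h x).mono (sub_le_self _ (effective_single x hr))

lemma one_le_rank_iff : 1 ≤ G.rank D ↔ ∀ x, G.Winnable (D - Pi.single x 1) := by
  refine ⟨winnable_sub_single zero_le_one, fun h => le_rank_iff.2 fun E hE hd => ?_⟩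
  have hpos : 0 < ∑ w, E w := zero_lt_one.trans_eq hd.symm
  obtain ⟨x, -, hx⟩ : ∃ x ∈ univ, 0 < E x := exists_lt_of_sum_lt (by rwa [sum_const_zero])
  exact eq_single_of_degree_eq hE hx hd ▸ h x

lemma two_le_rank_iff (hD : 1 ≤ D) : 2 ≤ G.rank D ↔ ∀ x, G.Winnable (D - Pi.single x 2) := by
  refine ⟨winnable_sub_single zero_le_two, fun h => le_rank_iff.2 fun E hE hd => ?_⟩
  by_cases hx : ∃ x, 2 ≤ E x
  · obtain ⟨x, hx⟩ := hx
    exact eq_single_of_degree_eq hE hx hd ▸ h x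
  · push Not at hx
    exact Effective.winnable fun w => sub_nonneg.2 ((Int.lt_add_one_iff.1 (hx w)).trans (hD w))

lemma le_degree_of_le_rank (hr : 0 ≤ r) (h : r ≤ G.rank D) : r ≤ degree D := by
  obtain ⟨x⟩ := ‹Nonempty V›
  have hdeg := (winnable_sub_single hr h x).degree_nonneg
  rwa [degree_sub, degree_single, sub_nonneg] at hdeg

end Rank

section Gonality

variable [Nonempty V] {D : V → ℤ} {k : ℤ}

lemma isLeast_gonality (G : Multigraph V) (hk : 0 ≤ k) :
    IsLeast {d | ∃ D, k ≤ G.rank D ∧ degree D = d} (G.gonality k) := by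
  set S := {d | ∃ D, k ≤ G.rank D ∧ degree D = d}
  have hconst : k ≤ G.rank fun _ => k := le_rank_iff.2 fun E hE hd =>
    Effective.winnable fun w => sub_nonneg.2 (hd ▸ hE.apply_le_degree w)
  have hbdd : BddBelow S := ⟨k, by rintro _ ⟨D, hD, rfl⟩; exact le_degree_of_le_rank hk hD⟩
  have hleast : IsLeast S (sInf S) :=
    ⟨Int.csInf_mem ⟨_, _, hconst, rfl⟩ hbdd, fun d hd => csInf_le hbdd hd⟩
  obtain ⟨D, hD, hdeg⟩ := hleast.1
  have hrank : G.rank D = k := by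
    obtain ⟨x⟩ := ‹Nonempty V›
    by_contra hne
    have hlt : k + 1 ≤ G.rank D := lt_of_le_of_ne hD (Ne.symm hne)
    have hsub := le_rank_sub (effective_single x zero_le_one) hlt
    rw [degree_single, add_sub_cancel_right] at hsub
    have := hleast.2 ⟨_, hsub, rfl⟩
    rw [degree_sub, degree_single] at this
    lia
  have hgon : IsLeast {d | ∃ D, G.rank D = k ∧ degree D = d} (sInf S) :=
    ⟨⟨D, hrank, hdeg⟩, fun _ ⟨D', hD', hd'⟩ => hleast.2 ⟨D', hD'.ge, hd'⟩⟩
  rwa [gonality, hgon.csInf_eq]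

lemma gonality_le_degree (hk : 0 ≤ k) (h : k ≤ G.rank D) : G.gonality k ≤ degree D :=
  (isLeast_gonality G hk).2 ⟨D, h, rfl⟩

lemma gonality_add_one_le (G : Multigraph V) (hk : 0 ≤ k) :
    G.gonality k + 1 ≤ G.gonality (k + 1) := by
  obtain ⟨D, hD, hdeg⟩ := (isLeast_gonality G (by lia : 0 ≤ k + 1)).1
  obtain ⟨x⟩ := ‹Nonempty V›
  have hsub := le_rank_sub (effective_single x zero_le_one) hD
  rw [degree_single, add_sub_cancel_right] at hsub
  have hle := gonality_le_degree hk hsub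
  rw [degree_sub, degree_single] at hle
  lia

lemma gonality_one_le_card (G : Multigraph V) : G.gonality 1 ≤ Fintype.card V := by
  have hone : 1 ≤ G.rank 1 := one_le_rank_iff.2 fun x =>
    (Effective.sub_single (E := 1) (fun _ => zero_le_one) le_rfl).winnable
  simpa [degree] using gonality_le_degree zero_le_one hone

end Gonality

section Pile

variable {α : Type*} [DecidableEq α] {A : Finset α} {p w : α}

/-- The divisor with `#A + 1` chips at `p`, no chip at the other vertices of `A` and one chip at
each vertex outside `A`. For `A = {v}` and `p = v` it is the divisor `v + ∑ w`, and along a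
quasi-banana graph it is the form this divisor takes once the levels in `A` have been fired. -/
def pile (A : Finset α) (p : α) : α → ℤ :=
  fun w => if w = p then #A + 1 else if w ∈ A then 0 else 1

@[simp]
lemma pile_self (A : Finset α) (p : α) : pile A p p = #A + 1 := if_pos rfl

lemma pile_of_mem (hw : w ∈ A) (hwp : w ≠ p) : pile A p w = 0 := by
  rw [pile, if_neg hwp, if_pos hw]

lemma pile_of_notMem (hp : p ∈ A) (hw : w ∉ A) : pile A p w = 1 := by
  rw [pile, if_neg (ne_of_mem_of_not_mem hp hw).symm, if_neg hw]

lemma effective_pile (A : Finset α) (p : α) : Effective (pile A p) := by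
  intro w
  rw [pile]
  split_ifs <;> positivity

lemma pile_singleton (v : α) : pile {v} v = fun w => (if w = v then 1 else 0) + 1 := by
  ext w
  by_cases hw : w = v <;> simp [pile, hw]

lemma one_le_pile_singleton (v : α) : 1 ≤ pile {v} v := by
  intro w
  by_cases hw : w = v <;> simp [pile, hw]

lemma effective_pile_sub_single (hA : A.Nonempty) (p : α) :
    Effective (pile A p - Pi.single p 2) :=
  (effective_pile A p).sub_single <| by
    have := hA.card_pos
    rw [pile_self]
    lia

lemma degree_pile [Fintype α] (hp : p ∈ A) : degree (pile A p) = Fintype.card α + 1 := by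
  have hrest : ∑ w ∈ A.erase p, pile A p w = 0 :=
    sum_eq_zero fun w hw => pile_of_mem (mem_of_mem_erase hw) (ne_of_mem_erase hw)
  have hout : ∑ w ∈ Aᶜ, pile A p w = #Aᶜ := by
    rw [sum_congr rfl fun w hw => pile_of_notMem hp (mem_compl.1 hw)]
    simp
  rw [degree, ← sum_add_sum_compl A, ← add_sum_erase A _ hp, hrest, hout, pile_self,
    ← card_add_card_compl A]
  push_cast
  ring

end Pile

theorem gonalityTight_and_realises_iff [Nonempty V] :
    (G.GonalityTight ∧ ∃ v, G.Realises 2 (pile {v} v)) ↔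
      G.gonality 1 = Fintype.card V ∧ ∃ v, 2 ≤ G.rank (pile {v} v) := by
  have hdeg (v : V) := degree_pile (mem_singleton_self v)
  constructor
  · rintro ⟨htight, v, hrank, hreal⟩
    rw [hdeg, htight] at hreal
    exact ⟨(add_right_cancel hreal).symm, v, hrank.ge⟩
  · rintro ⟨hcard, v, hrank⟩
    have hle := gonality_le_degree zero_le_two hrank
    have hge₁ : G.gonality 1 + 1 ≤ G.gonality 2 := gonality_add_one_le G zero_le_one
    have hge₂ : G.gonality 2 + 1 ≤ G.gonality 3 := gonality_add_one_le G zero_le_two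
    rw [hdeg] at hle
    have hrank' : G.rank (pile {v} v) < 3 := by
      by_contra! h
      have hle' := gonality_le_degree zero_le_three h
      rw [hdeg] at hle'
      lia
    exact ⟨show _ = _ by lia, v, by lia, by rw [hdeg]; lia⟩

section Connected

lemma Connected.exists_mult_pos (hG : G.Connected) {M : Finset V} (hM : M.Nonempty)
    (hM' : M ≠ univ) : ∃ a ∈ M, ∃ b ∉ M, 0 < G.mult a b := by
  by_contra! hcut
  obtain ⟨x, hx⟩ := hM
  refine hM' (eq_univ_of_forall fun y => ?_)
  induction hG.2 x y with
  | refl => exact hx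
  | tail _ hab ih => exact by_contra fun hb => hab.ne' (Nat.le_zero.1 (hcut _ ih _ hb))

lemma Connected.eq_of_laplacian_eq_zero (hG : G.Connected) {f : V → ℤ} (hf : G.laplacian f = 0)
    (x y : V) : f x = f y := by
  have := hG.1
  have huniv : maxSet f = univ := by
    by_contra hne
    obtain ⟨a, ha, b, hb, hab⟩ := hG.exists_mult_pos (maxSet_nonempty f) hne
    have hle := (mult_le_firing (G := G) ha hb).trans (firing_maxSet_le ha)
    rw [hf, Pi.zero_apply] at hle
    lia
  exact le_antisymm (mem_maxSet.1 (huniv ▸ mem_univ y) x) (mem_maxSet.1 (huniv ▸ mem_univ x) y)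

end Connected

section ExitsOnlyAt

/-- The vertex `p` lies outside `H`, and every edge leaving `H` ends at `p`. -/
def ExitsOnlyAt (G : Multigraph V) (H : Finset V) (p : V) : Prop :=
  p ∉ H ∧ ∀ w ∈ H, ∀ u ∉ H, u ≠ p → G.mult w u = 0

variable {H K : Finset V} {p w : V}

lemma exitsOnlyAt_compl_singleton (G : Multigraph V) (p : V) : G.ExitsOnlyAt {p}ᶜ p := by
  simp [ExitsOnlyAt]

lemma ExitsOnlyAt.sdiff (hH : G.ExitsOnlyAt H p) (hK : G.ExitsOnlyAt K p) :
    G.ExitsOnlyAt (H \ K) p := by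
  refine ⟨fun hp => hH.1 (mem_sdiff.1 hp).1, fun w hw u hu hup => ?_⟩
  obtain ⟨hwH, hwK⟩ := mem_sdiff.1 hw
  by_cases huH : u ∈ H
  · have huK : u ∈ K := by_contra fun h => hu (mem_sdiff.2 ⟨huH, h⟩)
    rw [G.symm]
    exact hK.2 u huK w hwK (ne_of_mem_of_not_mem hwH hH.1)
  · exact hH.2 w hwH u huH hup

lemma ExitsOnlyAt.firing_of_mem (hH : G.ExitsOnlyAt H p) (hw : w ∈ H) :
    G.firing H w = G.mult w p := by
  rw [Multigraph.firing_of_mem hw, sum_eq_single_of_mem p (mem_compl.2 hH.1)]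
  exact fun u hu hup => mod_cast hH.2 w hw u (mem_compl.1 hu) hup

lemma ExitsOnlyAt.firing_of_notMem (hH : G.ExitsOnlyAt H p) (hw : w ∉ H) (hwp : w ≠ p) :
    G.firing H w = 0 := by
  rw [Multigraph.firing_of_notMem hw, neg_eq_zero]
  exact sum_eq_zero fun u hu => by rw [G.symm, hH.2 u hu w hw hwp, Nat.cast_zero]

end ExitsOnlyAt

section Reduced

variable {D D' f : V → ℤ} {H U : Finset V} {p v w : V}

lemma Reduced.exists_lt_firing (hD : G.Reduced v D) (hU : U.Nonempty) (hv : v ∉ U) :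
    ∃ w ∈ U, D w < G.firing U w := by
  obtain ⟨w, hw, hlt⟩ := hD.2 U hU hv
  exact ⟨w, hw, by rwa [firing_of_mem hw, ← sub_neg]⟩

-- Otherwise set-firing the vertices of `H` at which `f` is largest would be legal.
lemma Reduced.apply_le_of_exitsOnlyAt (hD : G.Reduced v D) (hH : G.ExitsOnlyAt H p) (hv : v ∉ H)
    (hf : ∀ w ∈ H, G.laplacian f w ≤ D w) (hw : w ∈ H) : f w ≤ f p := by
  by_contra! hlt
  obtain ⟨y, hy, hmax⟩ := exists_max_image H f ⟨w, hw⟩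
  obtain ⟨x, hx, hxlt⟩ := hD.exists_lt_firing (U := {x ∈ H | f x = f y}) ⟨y, by simp [hy]⟩
    (by simp [hv])
  obtain ⟨hxH, hxy⟩ := mem_filter.1 hx
  refine hxlt.not_ge ((firing_le_laplacian hx fun u hu => ?_).trans (hf x hxH))
  rw [hxy]
  by_cases huH : u ∈ H
  · exact ⟨hmax u huH, fun hu' => (hmax u huH).lt_of_ne (by simpa [huH] using hu')⟩
  · have hup : u = p := by_contra fun hne => hu (hH.2 x hxH u huH hne)
    have hlt' : f u < f y := hup ▸ hlt.trans_le (hmax w hw)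
    exact ⟨hlt'.le, fun _ => hlt'⟩

lemma Reduced.mem_maxSet (hD : G.Reduced v D) (hf : ∀ w ≠ v, G.laplacian f w ≤ D w) :
    v ∈ maxSet f := by
  refine Multigraph.mem_maxSet.2 fun w => ?_
  obtain rfl | hw := eq_or_ne w v
  · exact le_rfl
  · exact hD.apply_le_of_exitsOnlyAt (exitsOnlyAt_compl_singleton G v) (by simp)
      (fun u hu => hf u (by simpa using hu)) (by simpa using hw)

lemma Reduced.le_apply [Nonempty V] (hD : G.Reduced v D) {r : ℤ} (hr : 0 ≤ r) (h : r ≤ G.rank D) :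
    r ≤ D v := by
  obtain ⟨f, hf⟩ := winnable_iff.1 (winnable_sub_single hr h v)
  have hmax : v ∈ maxSet f := hD.mem_maxSet fun w hw => by simpa [hw] using hf w
  have hle := (laplacian_nonneg_of_mem_maxSet hmax).trans (hf v)
  simpa using hle

lemma Reduced.exists_firing_le (hD : G.Reduced v D) (h : G.Winnable (D - Pi.single w 1))
    (hw : D w < 1) : ∃ T, v ∈ T ∧ w ∉ T ∧ ∀ u ∈ T, G.firing T u ≤ D u := by
  obtain ⟨f, hf⟩ := winnable_iff.1 h
  have hfD : G.laplacian f ≤ D := hf.trans (sub_le_self _ (effective_single w zero_le_one))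
  refine ⟨maxSet f, hD.mem_maxSet fun u _ => hfD u, fun hmax => ?_,
    fun u hu => (firing_maxSet_le hu).trans (hfD u)⟩
  have hle := (laplacian_nonneg_of_mem_maxSet hmax).trans (hf w)
  simp only [Pi.sub_apply, Pi.single_eq_same] at hle
  lia

lemma Reduced.eq_of_exitsOnlyAt (hD : G.Reduced v D) (hD' : G.Reduced p D')
    (h : G.LinEquiv D D') (hH : G.ExitsOnlyAt H p) (hv : v ∉ H) (hw : w ∈ H) : D' w = D w := by
  obtain ⟨f, rfl⟩ := h
  have hne {u : V} (hu : u ∈ H) : u ≠ p ∧ u ≠ v :=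
    ⟨ne_of_mem_of_not_mem hu hH.1, ne_of_mem_of_not_mem hu hv⟩
  have hconst {u : V} (hu : u ∈ H) : f u = f p := by
    refine le_antisymm ?_ (neg_le_neg_iff.1 ?_)
    · exact hD.apply_le_of_exitsOnlyAt hH hv (fun x hx => sub_nonneg.1 (hD'.1 x (hne hx).1)) hu
    · refine hD'.apply_le_of_exitsOnlyAt (f := -f) hH hH.1 (fun x hx => ?_) hu
      simpa [laplacian_neg] using hD.1 x (hne hx).2
  rw [Pi.sub_apply, laplacian_apply_eq_zero fun u hu => ?_, sub_zero]
  by_cases huH : u ∈ H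
  · rw [hconst huH, hconst hw]
  · rw [hconst hw, by_contra fun hup => hu (hH.2 w hw u huH hup)]

-- The outcomes `E - Δf` are bounded by `degree E`, and they determine `f` once `f v = 0`.
lemma Connected.finite_setOf_laplacian_le (hG : G.Connected) (v : V) (E : V → ℤ) :
    {f : V → ℤ | f v = 0 ∧ G.laplacian f ≤ E}.Finite := by
  refine Set.Finite.of_finite_image (f := fun f => E - G.laplacian f)
    ((Set.finite_Icc (0 : V → ℤ) fun _ => degree E).subset ?_) ?_
  · rintro _ ⟨f, ⟨-, hf⟩, rfl⟩
    have heff : Effective (E - G.laplacian f) := sub_nonneg.2 hf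
    refine ⟨sub_nonneg.2 hf, fun w => (heff.apply_le_degree w).trans_eq ?_⟩
    rw [degree_sub, degree_laplacian, sub_zero]
  · intro f hf g hg hfg
    have hzero : G.laplacian (f - g) = 0 := by
      rw [laplacian_sub, sub_eq_zero]
      exact sub_right_injective hfg
    ext x
    have hx := hG.eq_of_laplacian_eq_zero hzero x v
    rwa [Pi.sub_apply, Pi.sub_apply, hf.1, hg.1, sub_self, sub_eq_zero] at hx

-- A maximal function among those that vanish at `v` and keep `D` effective has a reduced outcome.
lemma Connected.exists_linEquiv_reduced (hG : G.Connected) (v : V) (hD : G.Winnable D) :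
    ∃ D', G.LinEquiv D D' ∧ G.Reduced v D' := by
  obtain ⟨E, hE, hDE⟩ := hD
  obtain ⟨f, ⟨hfv, hf⟩, hmax⟩ := (hG.finite_setOf_laplacian_le v E).exists_maximal
    ⟨0, rfl, by rw [laplacian_zero]; exact hE⟩
  refine ⟨E - G.laplacian f, hDE.trans ⟨f, rfl⟩, fun w _ => sub_nonneg.2 (hf w), fun U hU hv => ?_⟩
  by_contra! hlegal
  have hmem : f + (U : Set V).indicator 1 ∈ {f : V → ℤ | f v = 0 ∧ G.laplacian f ≤ E} := by
    refine ⟨by simp [hfv, hv], fun w => ?_⟩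
    rw [laplacian_add, Pi.add_apply, ← le_sub_iff_add_le']
    by_cases hw : w ∈ U
    · exact (firing_of_mem (G := G) hw).trans_le (sub_nonneg.1 (hlegal w hw))
    · exact (firing_nonpos hw).trans (sub_nonneg.2 (hf w))
  obtain ⟨x, hx⟩ := hU
  have hx' := hmax hmem (le_add_of_nonneg_right (Set.indicator_nonneg (by simp))) x
  simp [hx] at hx'

end Reduced

section BananaChain

/-- `S` can be glued to `A` as the next level of a quasi-banana graph: `S` is a clique with simple
edges, every vertex of `S` is joined to the root `p` of the last level of `A` by `#A + 1` edges,
and the rest of the graph is attached to `A ∪ S` at `a ∈ S` only. -/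
structure IsNextLevel (G : Multigraph V) (A : Finset V) (p : V) (S : Finset V) (a : V) : Prop where
  disjoint : Disjoint A S
  mem : a ∈ S
  mult_root : ∀ s ∈ S, G.mult p s = #A + 1
  pairwise : (S : Set V).Pairwise fun s t => G.mult s t = 1
  exitsOnlyAt : G.ExitsOnlyAt (A ∪ S)ᶜ a

/-- `A` is a union of initial levels of a quasi-banana structure on `G` whose level `0` is `{v}`,
and `p` is the vertex of the last of these levels at which the rest of `G` is attached. In the
notation of quasi-banana graphs, `v = u_{0,1}` and `p = u_{i,1}` for `A = C_0 ∪ ⋯ ∪ C_i`. -/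
inductive BananaChain (G : Multigraph V) (v : V) : Finset V → V → Prop
  | root : BananaChain G v {v} v
  | step {A S : Finset V} {p a : V} : BananaChain G v A p → G.IsNextLevel A p S a →
      BananaChain G v (A ∪ S) a

variable {A S : Finset V} {D : V → ℤ} {a p v w x y : V}

lemma IsNextLevel.notMem (h : G.IsNextLevel A p S a) (hx : x ∈ S) : x ∉ A :=
  disjoint_right.1 h.disjoint hx

lemma BananaChain.exitsOnlyAt (h : G.BananaChain v A p) : G.ExitsOnlyAt Aᶜ p := by
  cases h with
  | root => exact exitsOnlyAt_compl_singleton G _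
  | step _ hS => exact hS.exitsOnlyAt

lemma BananaChain.mem (h : G.BananaChain v A p) : p ∈ A := by
  simpa using h.exitsOnlyAt.1

-- Fire everything but `x` if `x ≠ a`, and everything in `A ∪ S` but `a` if `x = a`.
lemma IsNextLevel.exists_firing_eq (h : G.IsNextLevel A p S a) (hx : x ∈ S) :
    ∃ M, ∀ w ≠ x, G.firing M w = if w ∈ A ∪ S then (G.mult w x : ℤ) else 0 := by
  obtain rfl | hxa := eq_or_ne x a
  · have hM : G.ExitsOnlyAt ((A ∪ S).erase x) x := by
      refine ⟨notMem_erase x _, fun w hw u hu hux => ?_⟩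
      rw [G.symm]
      refine h.exitsOnlyAt.2 u ?_ w ?_ (ne_of_mem_erase hw)
      · exact mem_compl.2 fun hu' => hu (mem_erase.2 ⟨hux, hu'⟩)
      · exact fun hw' => mem_compl.1 hw' (mem_of_mem_erase hw)
    refine ⟨(A ∪ S).erase x, fun w hw => ?_⟩
    split_ifs with hwAS
    · exact hM.firing_of_mem (mem_erase.2 ⟨hw, hwAS⟩)
    · exact hM.firing_of_notMem (fun hw' => hwAS (mem_of_mem_erase hw')) hw
  · refine ⟨{x}ᶜ, fun w hw => ?_⟩
    rw [(exitsOnlyAt_compl_singleton G x).firing_of_mem (by simpa using hw)]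
    split_ifs with hwAS
    · rfl
    · exact mod_cast h.exitsOnlyAt.2 w (mem_compl.2 hwAS) x (by simp [hx]) hxa

lemma IsNextLevel.linEquiv_pile (h : G.IsNextLevel A p S a) (hA : G.ExitsOnlyAt Aᶜ p)
    (hx : x ∈ S) : G.LinEquiv (pile A p) (pile (A ∪ S) x) := by
  have hp : p ∈ A := by simpa using hA.1
  have hxA : x ∉ A := h.notMem hx
  obtain ⟨M, hM⟩ := h.exists_firing_eq hx
  refine linEquiv_of_forall_ne ?_ ((M : Set V).indicator 1) x fun w hw => ?_
  · rw [degree_pile hp, degree_pile (mem_union_right A hx)]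
  change pile A p w - G.firing M w = _
  rw [hM w hw]
  by_cases hwAS : w ∈ A ∪ S
  · rw [if_pos hwAS, pile_of_mem hwAS hw, sub_eq_zero]
    by_cases hwA : w ∈ A
    · obtain rfl | hwp := eq_or_ne w p
      · simp [h.mult_root x hx]
      · rw [pile_of_mem hwA hwp, G.symm, hA.2 x (by simpa) w (by simpa) hwp, Nat.cast_zero]
    · have hwS : w ∈ S := (mem_union.1 hwAS).resolve_left hwA
      rw [pile_of_notMem hp hwA, h.pairwise hwS hx hw, Nat.cast_one]
  · rw [if_neg hwAS, sub_zero, pile_of_notMem (mem_union_right A hx) hwAS,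
      pile_of_notMem hp fun hwA => hwAS (mem_union_left S hwA)]

lemma BananaChain.linEquiv_pile (h : G.BananaChain v A p) :
    G.LinEquiv (pile {v} v) (pile A p) := by
  induction h with
  | root => exact LinEquiv.refl _
  | step hA hS ih => exact ih.trans (hS.linEquiv_pile hA.exitsOnlyAt hS.mem)

lemma BananaChain.winnable_sub_single (h : G.BananaChain v A p) (hx : x ∈ A) :
    G.Winnable (pile {v} v - Pi.single x 2) := by
  induction h with
  | root =>
    obtain rfl := mem_singleton.1 hx
    exact (effective_pile_sub_single (singleton_nonempty x) x).winnable
  | step hA hS ih =>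
    obtain hxA | hxS := mem_union.1 hx
    · exact ih hxA
    · have hequiv := hA.linEquiv_pile.trans (hS.linEquiv_pile hA.exitsOnlyAt hxS)
      exact (hequiv.sub_right _).winnable (effective_pile_sub_single ⟨x, hx⟩ x).winnable

lemma BananaChain.two_le_rank [Nonempty V] (h : G.BananaChain v univ p) :
    2 ≤ G.rank (pile {v} v) :=
  (two_le_rank_iff (one_le_pile_singleton v)).2 fun x => h.winnable_sub_single (mem_univ x)

/- To give `y` a chip one fires a set containing `p` but not `y`; with `b ≥ 1` vertices of `S`
outside this set, `p` pays `b (#A + 1)` chips and each of the `#S - b` others in `S` pays `b`. -/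
lemma IsNextLevel.card_le_degree [Nonempty V] (h : G.IsNextLevel A p S a) (hp : p ∈ A)
    (hD : G.Reduced p D) (hrank : 1 ≤ G.rank D) (hout : ∀ w ∉ A ∪ S, 1 ≤ D w) (hy : y ∈ S)
    (hDy : D y < 1) : Fintype.card V ≤ degree D := by
  have hD0 (w : V) : 0 ≤ D w := by
    obtain rfl | hw := eq_or_ne w p
    · exact zero_le_one.trans (hD.le_apply zero_le_one hrank)
    · exact hD.1 w hw
  obtain ⟨T, hpT, hyT, hT⟩ :=
    hD.exists_firing_le (Multigraph.winnable_sub_single zero_le_one hrank y) hDy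
  have hpay {w : V} {c : ℕ} (hw : w ∈ T) (hc : ∀ u ∈ S \ T, G.mult w u = c) :
      (#(S \ T) * c : ℤ) ≤ D w := by
    refine le_trans ?_ ((sum_mult_le_firing hw (disjoint_sdiff (t := S))).trans (hT w hw))
    rw [sum_congr rfl fun u hu => by rw [hc u hu], sum_const, nsmul_eq_mul]
  have hA : (#(S \ T) * (#A + 1 : ℕ) : ℤ) ≤ ∑ w ∈ A, D w :=
    (hpay hpT fun u hu => h.mult_root u (mem_sdiff.1 hu).1).trans
      (single_le_sum (fun w _ => hD0 w) hp)
  have hST : (#(S ∩ T) * #(S \ T) : ℤ) ≤ ∑ w ∈ S ∩ T, D w := by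
    rw [← nsmul_eq_mul]
    refine card_nsmul_le_sum _ _ _ fun w hw => ?_
    obtain ⟨hwS, hwT⟩ := mem_inter.1 hw
    simpa using hpay (c := 1) hwT fun u hu =>
      h.pairwise hwS (mem_sdiff.1 hu).1 (ne_of_mem_of_not_mem hwT (mem_sdiff.1 hu).2)
  have hSdiff : 0 ≤ ∑ w ∈ S \ T, D w := sum_nonneg fun w _ => hD0 w
  have hcompl : (#(A ∪ S)ᶜ : ℤ) ≤ ∑ w ∈ (A ∪ S)ᶜ, D w := by
    simpa using card_nsmul_le_sum _ _ (1 : ℤ) fun w hw => hout w (mem_compl.1 hw)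
  have hpos : 0 < #(S \ T) := card_pos.2 ⟨y, mem_sdiff.2 ⟨hy, hyT⟩⟩
  rw [degree, ← sum_add_sum_compl (A ∪ S), sum_union h.disjoint, ← sum_inter_add_sum_sdiff S T,
    ← card_add_card_compl (A ∪ S), card_union_of_disjoint h.disjoint,
    ← card_inter_add_card_sdiff S T]
  push_cast at hA ⊢
  nlinarith

lemma BananaChain.card_le_degree (hG : G.Connected) (h : G.BananaChain v A p)
    (hD : G.Reduced p D) (hrank : 1 ≤ G.rank D) (hout : ∀ w ∉ A, 1 ≤ D w) :
    Fintype.card V ≤ degree D := by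
  have := hG.1
  induction h generalizing D with
  | root =>
    have hone : 1 ≤ D := fun w => by
      obtain rfl | hw := eq_or_ne w v
      · exact hD.le_apply zero_le_one hrank
      · exact hout w (by simpa using hw)
    simpa [degree] using degree_mono hone
  | @step A S p a hA hS ih =>
    obtain ⟨D', hDD', hD'⟩ := hG.exists_linEquiv_reduced p (winnable_of_le_rank zero_le_one hrank)
    have hrank' : 1 ≤ G.rank D' := hrank.trans hDD'.rank_le
    have hout' (w : V) (hw : w ∉ A ∪ S) : 1 ≤ D' w := by
      rw [← hD'.eq_of_exitsOnlyAt hD hDD'.symm hS.exitsOnlyAt (by simp [hA.mem]) (mem_compl.2 hw)]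
      exact hout w hw
    rw [hDD'.degree_eq]
    by_cases hlevel : ∀ y ∈ S, 1 ≤ D' y
    · refine ih hD' hrank' fun w hw => ?_
      by_cases hwS : w ∈ S
      · exact hlevel w hwS
      · exact hout' w (by simp [hw, hwS])
    · push Not at hlevel
      obtain ⟨y, hy, hDy⟩ := hlevel
      exact hS.card_le_degree hA.mem hD' hrank' hout' hy hDy

lemma BananaChain.gonality_one_eq (hG : G.Connected) (h : G.BananaChain v univ p) :
    G.gonality 1 = Fintype.card V := by
  have := hG.1
  refine (gonality_one_le_card G).antisymm ?_
  obtain ⟨D, hrank, hdeg⟩ := (isLeast_gonality G zero_le_one).1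
  obtain ⟨D', hDD', hD'⟩ := hG.exists_linEquiv_reduced p (winnable_of_le_rank zero_le_one hrank)
  rw [← hdeg, hDD'.degree_eq]
  exact h.card_le_degree hG hD' (hrank.trans hDD'.rank_le) fun w hw => absurd (mem_univ w) hw

end BananaChain

section LowGonality

variable {D E F : V → ℤ} {M : Finset V} {a b : V}

lemma linEquiv_sub_firing (G : Multigraph V) (D : V → ℤ) (M : Finset V) :
    G.LinEquiv D (D - G.firing M) :=
  ⟨_, rfl⟩

lemma Effective.sub_firing (hD : Effective D) (hM : ∀ w ∈ M, G.firing M w ≤ D w) :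
    Effective (D - G.firing M) := by
  intro w
  refine sub_nonneg.2 ?_
  by_cases hw : w ∈ M
  · exact hM w hw
  · exact (firing_nonpos hw).trans (hD w)

-- If not, firing `M` moves a chip across a cut edge at no debt, and `∑ w - b` has rank one.
lemma Connected.exists_two_le_firing (hG : G.Connected) (hgon : G.gonality 1 = Fintype.card V)
    (hM : M.Nonempty) (hM' : M ≠ univ) : ∃ w ∈ M, 2 ≤ G.firing M w := by
  have := hG.1
  by_contra! hlt
  obtain ⟨a, ha, b, hb, hab⟩ := hG.exists_mult_pos hM hM'
  have hone : 1 ≤ G.rank (1 - Pi.single b 1) := one_le_rank_iff.2 fun x => by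
    obtain rfl | hx := eq_or_ne x b
    · refine winnable_iff.2 ⟨(M : Set V).indicator 1, fun w => ?_⟩
      change G.firing M w ≤ _
      obtain rfl | hw := eq_or_ne w x
      · have hle := firing_le_neg_mult (G := G) hb ha
        rw [G.symm] at hle
        rw [Pi.sub_apply, Pi.sub_apply, Pi.one_apply, Pi.single_eq_same]
        lia
      · by_cases hwM : w ∈ M
        · simpa [hw] using Int.lt_add_one_iff.1 (hlt w hwM)
        · simpa [hw] using (firing_nonpos hwM).trans zero_le_one
    · have hb : Effective (1 - Pi.single b 1 : V → ℤ) :=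
        Effective.sub_single (fun _ => zero_le_one) le_rfl
      exact (hb.sub_single (by simp [hx])).winnable
  have hle := gonality_le_degree zero_le_one hone
  rw [hgon, degree_sub, degree_single] at hle
  simp [degree] at hle

lemma gonality_one_add_two_le_degree (hD : 1 ≤ D) (hE : Effective E) (hDE : G.LinEquiv D E)
    (hF : Effective F) (hDF : G.LinEquiv D F) (hab : a ≠ b) (hEa : 2 ≤ E a) (hEb : 1 ≤ E b)
    (hFa : 1 ≤ F a) (hFb : 2 ≤ F b) : G.gonality 1 + 2 ≤ degree D := by
  have : Nonempty V := ⟨a⟩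
  have hone : 1 ≤ G.rank (D - (Pi.single a 1 + Pi.single b 1)) := one_le_rank_iff.2 fun x => by
    rw [sub_sub]
    obtain rfl | hxa := eq_or_ne x a
    · refine (hDE.sub_right _).winnable (Effective.winnable ?_)
      rw [add_right_comm, ← Pi.single_add, ← sub_sub]
      exact (hE.sub_single hEa).sub_single (by simpa [hab.symm] using hEb)
    obtain rfl | hxb := eq_or_ne x b
    · refine (hDF.sub_right _).winnable (Effective.winnable ?_)
      rw [add_assoc, ← Pi.single_add, ← sub_sub]
      exact (hF.sub_single hFa).sub_single (by simpa [hab.symm] using hFb)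
    · have hD0 : Effective D := fun w => zero_le_one.trans (hD w)
      rw [← sub_sub, ← sub_sub]
      refine (((hD0.sub_single (hD a)).sub_single ?_).sub_single ?_).winnable
      · simpa [hab.symm] using hD b
      · simpa [hxa, hxb] using hD x
  have hle := gonality_le_degree zero_le_one hone
  rw [degree_sub, degree_add, degree_single, degree_single] at hle
  lia

end LowGonality

section Gate

/-- A set `M ⊇ A` of vertices which can be fired legally from `pile A p`, sending all chips to its
only exit `a`, where those leaving `p` make up the whole pile. The exits of gates will form the
next level. -/
structure IsGate (G : Multigraph V) (A : Finset V) (p : V) (M : Finset V) (a : V) : Prop where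
  subset : A ⊆ M
  exitsOnlyAt : G.ExitsOnlyAt M a
  mult_root : G.mult p a = #A + 1
  mult_le_one : ∀ w ∈ M, w ∉ A → G.mult w a ≤ 1

/-- Firing according to `f` turns `pile A p` into an effective divisor with at least two chips at
`x`, and the vertices at which `f` is largest form, together with `A`, a gate with exit `a`. -/
structure BringsTwo (G : Multigraph V) (A : Finset V) (p : V) (f : V → ℤ) (a x : V) : Prop where
  laplacian_le : G.laplacian f ≤ pile A p - Pi.single x 2
  mem_maxSet : p ∈ maxSet f
  isGate : G.IsGate A p (maxSet f ∪ A) a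

variable {A M N : Finset V} {E F f g : V → ℤ} {a b p v w x y : V}

lemma IsGate.exit_notMem (hM : G.IsGate A p M a) : a ∉ A :=
  fun ha => hM.exitsOnlyAt.1 (hM.subset ha)

lemma BananaChain.not_swap (h : G.BananaChain v A p) (hgon : G.gonality 1 = Fintype.card V)
    (hE : Effective E) (hAE : G.LinEquiv (pile A p) E) (hF : Effective F)
    (hAF : G.LinEquiv (pile A p) F) (hab : a ≠ b) (hEa : 2 ≤ E a) (hEb : 1 ≤ E b) (hFa : 1 ≤ F a) :
    F b < 2 := by
  by_contra! hFb
  have hle := gonality_one_add_two_le_degree (one_le_pile_singleton v) hE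
    (h.linEquiv_pile.trans hAE) hF (h.linEquiv_pile.trans hAF) hab hEa hEb hFa hFb
  rw [hgon, degree_pile (mem_singleton_self v)] at hle
  lia

lemma BananaChain.mult_eq_zero (h : G.BananaChain v A p) (hx : x ∈ A) (hxp : x ≠ p) (hw : w ∉ A) :
    G.mult x w = 0 := by
  rw [G.symm]
  exact h.exitsOnlyAt.2 w (mem_compl.2 hw) x (notMem_compl.2 hx) hxp

lemma BananaChain.reduced_pile (hG : G.Connected) (hgon : G.gonality 1 = Fintype.card V)
    (h : G.BananaChain v A p) : G.Reduced p (pile A p) := by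
  refine ⟨fun w _ => effective_pile A p w, fun U hU hp => ?_⟩
  suffices hneg : ∃ w ∈ U, pile A p w < G.firing U w by
    obtain ⟨w, hw, hlt⟩ := hneg
    exact ⟨w, hw, by rwa [sub_neg, ← firing_of_mem hw]⟩
  by_cases hUA : (U ∩ A).Nonempty
  · obtain ⟨a, ha, b, hb, hab⟩ := hG.exists_mult_pos hUA
      fun h' => hp (mem_of_mem_inter_left (h' ▸ mem_univ p))
    obtain ⟨haU, haA⟩ := mem_inter.1 ha
    have hap : a ≠ p := ne_of_mem_of_not_mem haU hp
    have hbA : b ∈ A := by_contra fun hbA => hab.ne' (h.mult_eq_zero haA hap hbA)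
    have hbU : b ∉ U := fun hbU => hb (mem_inter.2 ⟨hbU, hbA⟩)
    refine ⟨a, haU, ?_⟩
    rw [pile_of_mem haA hap]
    exact (Nat.cast_pos.2 hab).trans_le (mult_le_firing haU hbU)
  · obtain ⟨w, hw, hlt⟩ := hG.exists_two_le_firing hgon hU fun h' => hp (h' ▸ mem_univ p)
    refine ⟨w, hw, ?_⟩
    rw [pile_of_notMem h.mem fun hwA => hUA ⟨w, mem_inter.2 ⟨hw, hwA⟩⟩]
    lia

lemma BananaChain.two_le_pile_sub_firing (h : G.BananaChain v A p) (hAM : A ⊆ M) (hw : w ∈ M)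
    (ha : a ∉ M) (hwa : 0 < G.mult w a) : 2 ≤ (pile A p - G.firing M) a := by
  have hle := firing_le_neg_mult (G := G) ha hw
  rw [G.symm] at hle
  rw [Pi.sub_apply, pile_of_notMem h.mem fun haA => ha (hAM haA)]
  lia

lemma BananaChain.exists_isGate (hG : G.Connected) (hgon : G.gonality 1 = Fintype.card V)
    (h : G.BananaChain v A p) (hAM : A ⊆ M) (hM : M ≠ univ)
    (hlegal : ∀ w ∈ M, G.firing M w ≤ pile A p w) : ∃ a, G.IsGate A p M a := by
  obtain ⟨x, hx, a, ha, hxa⟩ := hG.exists_mult_pos ⟨p, hAM h.mem⟩ hM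
  have heff := (effective_pile A p).sub_firing hlegal
  have hequiv := linEquiv_sub_firing G (pile A p) M
  have htwo := h.two_le_pile_sub_firing hAM hx ha hxa
  have hexit : G.ExitsOnlyAt M a := by
    refine ⟨ha, fun w hw b hb hba => Nat.eq_zero_of_not_pos fun hwb => ?_⟩
    have htwo' := h.two_le_pile_sub_firing hAM hw hb hwb
    exact (h.not_swap hgon heff hequiv heff hequiv hba.symm htwo (one_le_two.trans htwo')
      (one_le_two.trans htwo)).not_ge htwo'
  have haA : a ∉ A := fun haA => ha (hAM haA)
  refine ⟨a, hAM, hexit, ?_, fun w hw hwA => ?_⟩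
  · have hp := hAM h.mem
    have hle := hlegal p hp
    rw [hexit.firing_of_mem hp, pile_self] at hle
    refine (mod_cast hle : G.mult p a ≤ #A + 1).antisymm (not_lt.1 fun hlt => ?_)
    have hrest : 1 ≤ (pile A p - G.firing M) p := by
      rw [Pi.sub_apply, hexit.firing_of_mem hp, pile_self]
      lia
    refine (h.not_swap hgon heff hequiv (effective_pile A p) (LinEquiv.refl _)
      (ne_of_mem_of_not_mem h.mem haA).symm htwo hrest (pile_of_notMem h.mem haA).ge).not_ge ?_
    have := card_pos.2 ⟨p, h.mem⟩
    rw [pile_self]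
    lia
  · have hle := hlegal w hw
    rw [hexit.firing_of_mem hw, pile_of_notMem h.mem hwA] at hle
    exact_mod_cast hle

lemma IsGate.effective_pile_sub_firing (h : G.BananaChain v A p) (hM : G.IsGate A p M a) :
    Effective (pile A p - G.firing M) := by
  refine (effective_pile A p).sub_firing fun w hw => ?_
  rw [hM.exitsOnlyAt.firing_of_mem hw]
  by_cases hwA : w ∈ A
  · obtain rfl | hwp := eq_or_ne w p
    · simp [hM.mult_root]
    · simp [h.mult_eq_zero hwA hwp hM.exit_notMem, pile_of_mem hwA hwp]
  · rw [pile_of_notMem h.mem hwA]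
    exact_mod_cast hM.mult_le_one w hw hwA

lemma IsGate.mem_of_ne (h : G.BananaChain v A p) (hM : G.IsGate A p M a) (hN : G.IsGate A p N b)
    (hab : a ≠ b) : b ∈ M := by
  by_contra hb
  have hzero := hM.exitsOnlyAt.2 p (hM.subset h.mem) b hb hab.symm
  rw [hN.mult_root] at hzero
  lia

lemma IsGate.mult_exits (hgon : G.gonality 1 = Fintype.card V) (h : G.BananaChain v A p)
    (hM : G.IsGate A p M a) (hN : G.IsGate A p N b) (hab : a ≠ b) : G.mult a b = 1 := by
  have haN := hN.mem_of_ne h hM hab.symm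
  refine (hN.mult_le_one a haN hM.exit_notMem).antisymm (Nat.one_le_iff_ne_zero.2 fun hzero => ?_)
  have htwo {K : Finset V} {c : V} (hK : G.IsGate A p K c) : 2 ≤ (pile A p - G.firing K) c :=
    h.two_le_pile_sub_firing hK.subset (hK.subset h.mem) hK.exitsOnlyAt.1 (by simp [hK.mult_root])
  have hone {K : Finset V} {c d : V} (hK : G.IsGate A p K c) (hd : d ∈ K) (hdA : d ∉ A)
      (hdc : G.mult d c = 0) : 1 ≤ (pile A p - G.firing K) d := by
    rw [Pi.sub_apply, hK.exitsOnlyAt.firing_of_mem hd, hdc, pile_of_notMem h.mem hdA]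
    simp
  exact (h.not_swap hgon (hM.effective_pile_sub_firing h) (linEquiv_sub_firing G _ M)
    (hN.effective_pile_sub_firing h) (linEquiv_sub_firing G _ N) hab (htwo hM)
    (hone hM (hM.mem_of_ne h hN hab) hN.exit_notMem (by rwa [G.symm]))
    (hone hN haN hM.exit_notMem hzero)).not_ge (htwo hN)

lemma IsGate.mem_of_notMem (hG : G.Connected) (h : G.BananaChain v A p) (hM : G.IsGate A p M a)
    (hN : G.IsGate A p N b) (hab : a ≠ b) (hy : y ∉ N) : y ∈ M := by
  by_contra hyM
  obtain ⟨x, hx, u, hu, hxu⟩ := hG.exists_mult_pos (M := (M ∪ N)ᶜ) ⟨y, by simp [hy, hyM]⟩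
    fun huniv => (mem_compl.1 (huniv ▸ mem_univ p)) (mem_union_left N (hM.subset h.mem))
  rw [mem_compl, mem_union, not_or] at hx
  rw [G.symm] at hxu
  obtain huM | huN := mem_union.1 (notMem_compl.1 hu)
  · refine hxu.ne' (hM.exitsOnlyAt.2 u huM x hx.1 ?_)
    exact (ne_of_mem_of_not_mem (hN.mem_of_ne h hM hab.symm) hx.2).symm
  · refine hxu.ne' (hN.exitsOnlyAt.2 u huN x hx.2 ?_)
    exact (ne_of_mem_of_not_mem (hM.mem_of_ne h hN hab) hx.1).symm

lemma IsGate.subset_of_exit_eq (hG : G.Connected) (hgon : G.gonality 1 = Fintype.card V)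
    (hM : G.IsGate A p M a) (hN : G.IsGate A p N a) : M ⊆ N := by
  by_contra hMN
  have hexit := hM.exitsOnlyAt.sdiff hN.exitsOnlyAt
  obtain ⟨w, hw, hlt⟩ := hG.exists_two_le_firing hgon (sdiff_nonempty.2 hMN)
    fun huniv => hexit.1 (huniv ▸ mem_univ a)
  obtain ⟨hwM, hwN⟩ := mem_sdiff.1 hw
  rw [hexit.firing_of_mem hw] at hlt
  exact absurd (hM.mult_le_one w hwM fun hwA => hwN (hN.subset hwA)) (by lia)

lemma notMem_maxSet_union (hp : p ∈ A) (hx : x ∉ A)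
    (hf : G.laplacian f ≤ pile A p - Pi.single x 2) : x ∉ maxSet f ∪ A := by
  rw [mem_union, not_or]
  refine ⟨fun hmax => ?_, hx⟩
  have hle := (laplacian_nonneg_of_mem_maxSet hmax).trans (hf x)
  simp [pile_of_notMem hp hx] at hle

lemma BringsTwo.notMem (h : G.BananaChain v A p) (hf : G.BringsTwo A p f a x) (hx : x ∉ A) :
    x ∉ maxSet f ∪ A :=
  notMem_maxSet_union h.mem hx hf.laplacian_le

lemma BananaChain.exists_bringsTwo (hG : G.Connected) (hgon : G.gonality 1 = Fintype.card V)
    (hrank : 2 ≤ G.rank (pile {v} v)) (h : G.BananaChain v A p) (hx : x ∉ A) :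
    ∃ f a, G.BringsTwo A p f a x := by
  have := hG.1
  obtain ⟨f, hf⟩ := winnable_iff.1 <|
    Multigraph.winnable_sub_single zero_le_two (hrank.trans h.linEquiv_pile.rank_le) x
  have hle : G.laplacian f ≤ pile A p := hf.trans (sub_le_self _ (effective_single x zero_le_two))
  have hp : p ∈ maxSet f := (h.reduced_pile hG hgon).mem_maxSet fun w _ => hle w
  have hlegal (w : V) (hw : w ∈ maxSet f ∪ A) : G.firing (maxSet f ∪ A) w ≤ pile A p w := by
    by_cases hmax : w ∈ maxSet f
    · exact ((firing_anti hmax subset_union_left).trans (firing_maxSet_le hmax)).trans (hle w)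
    · have hwA : w ∈ A := (mem_union.1 hw).resolve_left hmax
      have hwp : w ≠ p := (ne_of_mem_of_not_mem hp hmax).symm
      refine (firing_anti hwA subset_union_right).trans ?_
      rw [firing_of_mem hwA, pile_of_mem hwA hwp]
      exact (sum_eq_zero fun u hu => mod_cast h.mult_eq_zero hwA hwp (mem_compl.1 hu)).le
  have hne : maxSet f ∪ A ≠ univ :=
    fun huniv => notMem_maxSet_union h.mem hx hf (huniv ▸ mem_univ x)
  obtain ⟨a, ha⟩ := h.exists_isGate hG hgon subset_union_right hne hlegal
  exact ⟨f, a, hf, hp, ha⟩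

lemma BringsTwo.laplacian_eq_zero (h : G.BananaChain v A p) (hf : G.BringsTwo A p f a x)
    (hN : G.IsGate A p N b) (hab : a ≠ b) (hy : y ∈ maxSet f) (hyA : y ∉ A) (hyN : y ∉ N)
    (hyb : y ≠ b) : G.laplacian f y = 0 := by
  refine laplacian_apply_eq_zero fun u hu => ?_
  suffices hmax : u ∈ maxSet f from
    le_antisymm (Multigraph.mem_maxSet.1 hy u) (Multigraph.mem_maxSet.1 hmax y)
  by_contra hmax
  by_cases huA : u ∈ A
  · refine hu (h.exitsOnlyAt.2 y (mem_compl.2 hyA) u (notMem_compl.2 huA) ?_)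
    exact (ne_of_mem_of_not_mem hf.mem_maxSet hmax).symm
  · obtain rfl : u = a := by_contra fun hua =>
      hu (hf.isGate.exitsOnlyAt.2 y (mem_union_left A hy) u (by simp [hmax, huA]) hua)
    refine hu ?_
    rw [G.symm]
    exact hN.exitsOnlyAt.2 u (hN.mem_of_ne h hf.isGate hab.symm) y hyN hyb

lemma BringsTwo.exit_eq (hG : G.Connected) (hgon : G.gonality 1 = Fintype.card V)
    (h : G.BananaChain v A p) (hf : G.BringsTwo A p f a x) (hg : G.BringsTwo A p g b y)
    (hx : x ∉ A) (hxa : x ≠ a) (hy : y ∉ A) (hyb : y ≠ b) : a = b := by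
  by_contra hab
  have hxM := hf.notMem h hx
  have hyN := hg.notMem h hy
  have hyM := hf.isGate.mem_of_notMem hG h hg.isGate hab hyN
  have hxN := hg.isGate.mem_of_notMem hG h hf.isGate (Ne.symm hab) hxM
  have hfy := hf.laplacian_eq_zero h hg.isGate hab ((mem_union.1 hyM).resolve_right hy) hy hyN hyb
  have hgx := hg.laplacian_eq_zero h hf.isGate (Ne.symm hab)
    ((mem_union.1 hxN).resolve_right hx) hx hxM hxa
  have heff {k : V → ℤ} {c u : V} (hk : G.BringsTwo A p k c u) :
      Effective (pile A p - G.laplacian k) :=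
    sub_nonneg.2 (hk.laplacian_le.trans (sub_le_self _ (effective_single u zero_le_two)))
  have htwo {k : V → ℤ} {c u : V} (hk : G.BringsTwo A p k c u) :
      2 ≤ (pile A p - G.laplacian k) u := by
    have hle := hk.laplacian_le u
    rw [Pi.sub_apply, Pi.single_eq_same] at hle
    rw [Pi.sub_apply]
    lia
  refine (h.not_swap hgon (heff hf) ⟨f, rfl⟩ (heff hg) ⟨g, rfl⟩
    (ne_of_mem_of_not_mem hyM hxM).symm (htwo hf) ?_ ?_).not_ge (htwo hg)
  · rw [Pi.sub_apply, hfy, pile_of_notMem h.mem hy, sub_zero]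
  · rw [Pi.sub_apply, hgx, pile_of_notMem h.mem hx, sub_zero]

end Gate

section Converse

variable {A S : Finset V} {p v : V}

lemma BananaChain.exists_isGate_subset (hG : G.Connected) (hgon : G.gonality 1 = Fintype.card V)
    (hrank : 2 ≤ G.rank (pile {v} v)) (h : G.BananaChain v A p) (hA : A ≠ univ)
    (hS : ∀ s, s ∈ S ↔ ∃ M, G.IsGate A p M s) : ∃ M a, G.IsGate A p M a ∧ M ⊆ A ∪ S := by
  by_cases hAS : A ∪ S = univ
  · obtain ⟨x, hx⟩ : ∃ x, x ∉ A := by simpa [eq_univ_iff_forall] using hA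
    obtain ⟨f, a, hf⟩ := h.exists_bringsTwo hG hgon hrank hx
    exact ⟨_, a, hf.isGate, hAS ▸ subset_univ _⟩
  · have hout {u : V} (hu : u ∉ A ∪ S) :
        u ∉ A ∧ ∃ f a, G.BringsTwo A p f a u ∧ u ≠ a := by
      rw [mem_union, not_or] at hu
      obtain ⟨f, a, hf⟩ := h.exists_bringsTwo hG hgon hrank hu.1
      exact ⟨hu.1, f, a, hf, fun hua => hu.2 ((hS u).2 ⟨_, hua ▸ hf.isGate⟩)⟩
    obtain ⟨x, hx⟩ : ∃ x, x ∉ A ∪ S := by simpa [eq_univ_iff_forall] using hAS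
    obtain ⟨hxA, f, a, hf, hxa⟩ := hout hx
    refine ⟨_, a, hf.isGate, fun y hy => by_contra fun hyAS => ?_⟩
    obtain ⟨hyA, g, b, hg, hyb⟩ := hout hyAS
    obtain rfl := hf.exit_eq hG hgon h hg hxA hxa hyA hyb
    exact hg.notMem h hyA (hf.isGate.subset_of_exit_eq hG hgon hg.isGate hy)

lemma BananaChain.exists_isNextLevel (hG : G.Connected) (hgon : G.gonality 1 = Fintype.card V)
    (hrank : 2 ≤ G.rank (pile {v} v)) (h : G.BananaChain v A p) (hA : A ≠ univ) :
    ∃ S a, G.IsNextLevel A p S a := by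
  classical
  set S : Finset V := {s | ∃ M, G.IsGate A p M s}
  have hS (s : V) : s ∈ S ↔ ∃ M, G.IsGate A p M s := by simp [S]
  obtain ⟨M, a, hM, hMS⟩ := h.exists_isGate_subset hG hgon hrank hA hS
  have haS : a ∈ S := (hS a).2 ⟨M, hM⟩
  refine ⟨S, a, disjoint_right.2 fun s hs => ?_, haS, fun s hs => ?_, fun s hs t ht hst => ?_,
    by simp [haS], fun w hw u hu hua => ?_⟩
  · exact ((hS s).1 hs).choose_spec.exit_notMem
  · exact ((hS s).1 hs).choose_spec.mult_root
  · obtain ⟨⟨K, hK⟩, L, hL⟩ := (hS s).1 hs, (hS t).1 ht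
    exact hK.mult_exits hgon h hL hst
  · have hwM : w ∉ M := fun hwM => mem_compl.1 hw (hMS hwM)
    have hwa : w ≠ a := fun hwa => mem_compl.1 hw (hwa ▸ mem_union_right A haS)
    have huM : u ∈ M := by
      obtain huA | huS := mem_union.1 (notMem_compl.1 hu)
      · exact hM.subset huA
      · obtain ⟨K, hK⟩ := (hS u).1 huS
        exact hM.mem_of_ne h hK hua.symm
    rw [G.symm]
    exact hM.exitsOnlyAt.2 u huM w hwM hwa

theorem exists_bananaChain_univ (hG : G.Connected) (hgon : G.gonality 1 = Fintype.card V)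
    (hrank : 2 ≤ G.rank (pile {v} v)) : ∃ p, G.BananaChain v univ p := by
  obtain ⟨A, ⟨p, h⟩, hmax⟩ :=
    (Set.toFinite {A | ∃ p, G.BananaChain v A p}).exists_maximal ⟨_, v, .root⟩
  obtain rfl | hA := eq_or_ne A univ
  · exact ⟨p, h⟩
  · obtain ⟨S, a, hS⟩ := h.exists_isNextLevel hG hgon hrank hA
    exact absurd (hmax ⟨a, h.step hS⟩ subset_union_left (mem_union_right A hS.mem))
      (hS.notMem hS.mem)

end Converse

section Labelling

/-- The set of labels `(i, j)` of the vertices `u_{i,j}` of the quasi-banana graph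
`QB_m(q_1, …, q_m)`. -/
def qbIndex (m : ℕ) (q : ℕ → ℕ) : Finset (ℕ × ℕ) :=
  (range (m + 1)).biUnion fun i => {i} ×ˢ Icc 1 (qbSize q i)

/-- The number of edges of a quasi-banana graph between distinct vertices with labels `x`, `y`. -/
def qbMult (q : ℕ → ℕ) (x y : ℕ × ℕ) : ℕ :=
  if x.1 = y.1 then 1
  else if x.1 + 1 = y.1 ∧ x.2 = 1 then (∑ i ∈ Icc 1 x.1, q i) + 2
  else if y.1 + 1 = x.1 ∧ y.2 = 1 then (∑ i ∈ Icc 1 y.1, q i) + 2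
  else 0

/-- `ℓ` identifies the subgraph of `G` induced on `A` with the quasi-banana graph
`QB_m(q_1, …, q_m)`. -/
structure IsQBLabellingOn (G : Multigraph V) (A : Finset V) (m : ℕ) (q : ℕ → ℕ) (ℓ : V → ℕ × ℕ) :
    Prop where
  pos : ∀ i, 1 ≤ i → i ≤ m → 0 < q i
  bijOn : Set.BijOn ℓ A (qbIndex m q)
  mult : (A : Set V).Pairwise fun v w => G.mult v w = qbMult q (ℓ v) (ℓ w)

variable {q q' : ℕ → ℕ} {i m : ℕ} {x y : ℕ × ℕ}

lemma mem_qbIndex : x ∈ qbIndex m q ↔ x.1 ≤ m ∧ 1 ≤ x.2 ∧ x.2 ≤ qbSize q x.1 := by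
  simp [qbIndex, Prod.ext_iff]

lemma qbIndex_zero : qbIndex 0 q = {(0, 1)} := rfl

lemma qbIndex_succ : qbIndex (m + 1) q = qbIndex m q ∪ {m + 1} ×ˢ Icc 1 (q (m + 1)) := by
  rw [qbIndex, range_add_one, biUnion_insert, union_comm]
  rfl

lemma card_qbIndex : #(qbIndex m q) = (∑ i ∈ Icc 1 m, q i) + 1 := by
  induction m with
  | zero => rfl
  | succ m ih =>
    have hdisj : Disjoint (qbIndex m q) ({m + 1} ×ˢ Icc 1 (q (m + 1))) := by
      refine disjoint_left.2 fun x hx hx' => ?_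
      have := (mem_qbIndex.1 hx).1
      have := mem_singleton.1 (mem_product.1 hx').1
      lia
    rw [qbIndex_succ, card_union_of_disjoint hdisj, ih, sum_Icc_succ_top (by lia), card_product,
      card_singleton, Nat.card_Icc]
    lia

lemma qbIndex_congr (h : ∀ i ≤ m, q i = q' i) : qbIndex m q = qbIndex m q' := by
  ext x
  simp only [mem_qbIndex, qbSize]
  refine and_congr_right fun hx => ?_
  rw [h x.1 hx]

lemma qbMult_comm (q : ℕ → ℕ) (x y : ℕ × ℕ) : qbMult q x y = qbMult q y x := by
  simp only [qbMult]
  split_ifs <;> lia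

lemma qbMult_of_fst_eq (h : x.1 = y.1) : qbMult q x y = 1 := if_pos h

lemma qbMult_of_fst_lt (h : x.1 < y.1) :
    qbMult q x y = if y.1 = x.1 + 1 ∧ x.2 = 1 then #(qbIndex x.1 q) + 1 else 0 := by
  simp only [qbMult, card_qbIndex]
  split_ifs <;> lia

lemma qbMult_congr (h : ∀ i ≤ m, q i = q' i) (hx : x.1 ≤ m) (hy : y.1 ≤ m) :
    qbMult q x y = qbMult q' x y := by
  have hsum {k : ℕ} (hk : k ≤ m) : ∑ i ∈ Icc 1 k, q i = ∑ i ∈ Icc 1 k, q' i :=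
    sum_congr rfl fun i hi => h i ((mem_Icc.1 hi).2.trans hk)
  simp only [qbMult, hsum hx, hsum hy]

variable {A S : Finset V} {ℓ : V → ℕ × ℕ} {a p s v : V}

lemma isQBLabelling_iff : G.IsQBLabelling m q ℓ ↔ G.IsQBLabellingOn univ m q ℓ := by
  constructor
  · rintro ⟨hpos, hinj, hmem, hsurj, hmult⟩
    refine ⟨hpos, ⟨fun v _ => mem_qbIndex.2 (hmem v), hinj.injOn, fun x hx => ?_⟩,
      fun v _ w _ hvw => hmult v w hvw⟩
    obtain ⟨hx₁, hx₂, hx₃⟩ := mem_qbIndex.1 hx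
    obtain ⟨v, hv⟩ := hsurj x.1 x.2 hx₁ hx₂ hx₃
    exact ⟨v, by simp, hv⟩
  · rintro ⟨hpos, hbij, hmult⟩
    refine ⟨hpos, fun v w hvw => hbij.injOn (by simp) (by simp) hvw,
      fun v => mem_qbIndex.1 (hbij.mapsTo (by simp)), fun i j hi hj hj' => ?_,
      fun v w hvw => hmult (by simp) (by simp) hvw⟩
    obtain ⟨v, -, hv⟩ := hbij.surjOn (mem_qbIndex.2 ⟨hi, hj, hj'⟩ : (i, j) ∈ qbIndex m q)
    exact ⟨v, hv⟩

lemma exists_bijOn_Icc {α : Type*} {S : Finset α} {a : α} (ha : a ∈ S) :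
    ∃ e : α → ℕ, Set.BijOn e S (Icc 1 #S) ∧ e a = 1 := by
  classical
  have hcard : (S.erase a : Set α).encard = (Ioc 1 #S : Set ℕ).encard := by
    rw [Set.encard_coe_eq_coe_finsetCard, Set.encard_coe_eq_coe_finsetCard, card_erase_of_mem ha,
      Nat.card_Ioc]
  obtain ⟨e, he⟩ := (S.erase a).finite_toSet.exists_bijOn_of_encard_eq hcard
  have hupd : Set.EqOn e (Function.update e a 1) (S.erase a) :=
    fun s hs => (Function.update_of_ne (ne_of_mem_erase hs) _ _).symm
  refine ⟨Function.update e a 1, ?_, Function.update_self ..⟩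
  have hins := (he.congr hupd).insert (a := a) (by simp)
  rwa [Function.update_self, ← coe_insert, insert_erase ha, ← coe_insert,
    Ioc_insert_left (card_pos.2 ⟨a, ha⟩)] at hins

lemma IsQBLabellingOn.fst_le (h : G.IsQBLabellingOn A m q ℓ) (hv : v ∈ A) : (ℓ v).1 ≤ m :=
  (mem_qbIndex.1 (h.bijOn.mapsTo hv)).1

lemma IsQBLabellingOn.card (h : G.IsQBLabellingOn A m q ℓ) : #A = #(qbIndex m q) :=
  h.bijOn.finsetCard_eq

lemma IsQBLabellingOn.mult_root (h : G.IsQBLabellingOn A m q ℓ) (hA : G.ExitsOnlyAt Aᶜ p)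
    (hp : ℓ p = (m, 1)) (hv : v ∈ A) (hs : s ∉ A) (hps : G.mult p s = #A + 1) (hy : y.1 = m + 1) :
    G.mult v s = qbMult q (ℓ v) y := by
  have hpA : p ∈ A := by simpa using hA.1
  have hle := h.fst_le hv
  rw [qbMult_of_fst_lt (by lia)]
  obtain rfl | hvp := eq_or_ne v p
  · simp [hp, hps, h.card, hy]
  · rw [G.symm, hA.2 s (by simpa) v (by simpa) hvp, if_neg]
    rintro ⟨hm, hj⟩
    exact hvp (h.bijOn.injOn hv hpA (Prod.ext (by rw [hp]; lia) (by rw [hp, hj])))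

lemma IsQBLabellingOn.congr (h : G.IsQBLabellingOn A m q ℓ) (hq : ∀ i ≤ m, q i = q' i)
    {ℓ' : V → ℕ × ℕ} (hℓ : Set.EqOn ℓ ℓ' A) : G.IsQBLabellingOn A m q' ℓ' where
  pos i hi him := hq i him ▸ h.pos i hi him
  bijOn := qbIndex_congr hq ▸ h.bijOn.congr hℓ
  mult v hv w hw hvw := by
    simp only [← hℓ hv, ← hℓ hw, h.mult hv hw hvw, qbMult_congr hq (h.fst_le hv) (h.fst_le hw)]

lemma IsQBLabellingOn.union (h : G.IsQBLabellingOn A m q ℓ) (hA : G.ExitsOnlyAt Aᶜ p)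
    (hp : ℓ p = (m, 1)) (hS : G.IsNextLevel A p S a)
    (hℓ : Set.BijOn ℓ S ({m + 1} ×ˢ Icc 1 (q (m + 1)) : Finset (ℕ × ℕ))) :
    G.IsQBLabellingOn (A ∪ S) (m + 1) q ℓ := by
  have hfst {s : V} (hs : s ∈ S) : (ℓ s).1 = m + 1 :=
    mem_singleton.1 (mem_product.1 (hℓ.mapsTo hs)).1
  refine ⟨fun i hi him => ?_, ?_, ?_⟩
  · obtain him | rfl := him.lt_or_eq
    · exact h.pos i hi (Nat.lt_succ_iff.1 him)
    · obtain ⟨-, hmem⟩ := mem_product.1 (hℓ.mapsTo hS.mem)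
      exact (mem_Icc.1 hmem).1.trans (mem_Icc.1 hmem).2
  · rw [qbIndex_succ, coe_union, coe_union]
    refine h.bijOn.union hℓ ((Set.injOn_union (disjoint_coe.2 hS.disjoint)).2
      ⟨h.bijOn.injOn, hℓ.injOn, fun v hv s hs hvs => ?_⟩)
    have hle := h.fst_le hv
    rw [hvs, hfst hs] at hle
    lia
  · rw [coe_union, Set.pairwise_union]
    refine ⟨h.mult, fun s hs t ht hst => ?_, fun v hv s hs _ => ?_⟩
    · exact (hS.pairwise hs ht hst).trans
        (qbMult_of_fst_eq ((hfst hs).trans (hfst ht).symm)).symm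
    · have hvs := h.mult_root hA hp hv (hS.notMem hs) (hS.mult_root s hs) (hfst hs)
      exact ⟨hvs, by rw [G.symm, hvs, qbMult_comm]⟩

lemma BananaChain.exists_isQBLabellingOn (h : G.BananaChain v A p) :
    ∃ m q ℓ, G.IsQBLabellingOn A m q ℓ ∧ ℓ p = (m, 1) := by
  induction h with
  | root => exact ⟨0, 0, fun _ => (0, 1), ⟨by lia, by simp [qbIndex_zero], by simp⟩, rfl⟩
  | @step A S p a hA hS ih =>
    obtain ⟨m, q, ℓ, hℓ, hp⟩ := ih
    obtain ⟨e, he, hea⟩ := exists_bijOn_Icc hS.mem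
    set ℓ' : V → ℕ × ℕ := fun w => if w ∈ S then (m + 1, e w) else ℓ w
    have hℓ' : Set.EqOn ℓ ℓ' A :=
      fun w hw => (if_neg (disjoint_left.1 hS.disjoint hw)).symm
    have hmem {w : V} (hw : w ∈ S) : ℓ' w = (m + 1, e w) := if_pos hw
    refine ⟨m + 1, Function.update q (m + 1) #S, ℓ',
      (hℓ.congr (fun i hi => ?_) hℓ').union hA.exitsOnlyAt ((hℓ' hA.mem).symm.trans hp) hS ?_,
      by rw [hmem hS.mem, hea]⟩
    · rw [Function.update_of_ne (by lia)]
    · rw [Function.update_self]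
      refine Set.BijOn.congr ?_ fun s hs => (hmem hs).symm
      refine ⟨fun s hs => by simpa using he.mapsTo hs,
        fun s hs t ht hst => he.injOn hs ht (congrArg Prod.snd hst), fun x hx => ?_⟩
      obtain ⟨hx₁, hx₂⟩ := mem_product.1 (mem_coe.1 hx)
      obtain ⟨s, hs, hsx⟩ := he.surjOn hx₂
      exact ⟨s, hs, Prod.ext (mem_singleton.1 hx₁).symm hsx⟩

lemma IsQBLabellingOn.card_filter_le (h : G.IsQBLabellingOn univ m q ℓ) (hi : i ≤ m) :
    #{w | (ℓ w).1 ≤ i} = #(qbIndex i q) := by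
  have hpre : ((univ : Finset V) : Set V) ∩ ℓ ⁻¹' (qbIndex i q) =
      ({w | (ℓ w).1 ≤ i} : Finset V) := by
    ext w
    have hw := mem_qbIndex.1 (h.bijOn.mapsTo (mem_coe.2 (mem_univ w)))
    simp [mem_qbIndex, hw.2]
  have hsub : qbIndex i q ⊆ qbIndex m q := fun x hx =>
    mem_qbIndex.2 ⟨(mem_qbIndex.1 hx).1.trans hi, (mem_qbIndex.1 hx).2⟩
  exact (hpre ▸ h.bijOn.subset_right (coe_subset.2 hsub)).finsetCard_eq

lemma IsQBLabellingOn.isNextLevel (h : G.IsQBLabellingOn univ m q ℓ) (hi : i ≤ m)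
    (hp : ℓ p = (i, 1)) (ha : ℓ a = (i + 1, 1)) :
    G.IsNextLevel {w | (ℓ w).1 ≤ i} p {w | (ℓ w).1 = i + 1} a := by
  have hmult {w u : V} (hwu : w ≠ u) := h.mult (by simp) (by simp) hwu
  refine ⟨disjoint_left.2 ?_, by simp [ha], fun s hs => ?_, fun s hs t ht hst => ?_,
    by simp [ha], fun w hw u hu hua => ?_⟩
  · simp only [mem_filter_univ]
    lia
  · replace hs := (mem_filter_univ s).1 hs
    rw [hmult fun hps => by rw [← hps, hp] at hs; lia, qbMult_of_fst_lt (by rw [hp]; lia),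
      h.card_filter_le hi]
    simp [hp, hs]
  · refine (hmult hst).trans (qbMult_of_fst_eq ?_)
    rw [(mem_filter_univ s).1 hs, (mem_filter_univ t).1 ht]
  · simp only [mem_compl, mem_union, mem_filter_univ, not_or, not_and, not_not] at hw hu
    have hlt : (ℓ u).1 < (ℓ w).1 := by lia
    rw [G.symm, hmult fun huw => by rw [huw] at hlt; lia, qbMult_of_fst_lt hlt, if_neg]
    rintro ⟨hwu, hu₂⟩
    exact hua (h.bijOn.injOn (by simp) (by simp) (Prod.ext (by rw [ha]; lia) (by rw [ha, hu₂])))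

lemma IsQBLabellingOn.exists_eq_one (h : G.IsQBLabellingOn univ m q ℓ) (hi : i ≤ m) :
    ∃ p, ℓ p = (i, 1) := by
  have hsize : 1 ≤ qbSize q i := by
    obtain rfl | hi0 := i.eq_zero_or_pos
    · rfl
    · rw [qbSize, if_neg hi0.ne']
      exact h.pos i hi0 hi
  obtain ⟨p, -, hp⟩ := h.bijOn.surjOn (mem_qbIndex.2 ⟨hi, le_rfl, hsize⟩ : (i, 1) ∈ qbIndex m q)
  exact ⟨p, hp⟩

lemma IsQBLabellingOn.bananaChain (h : G.IsQBLabellingOn univ m q ℓ) (hv : ℓ v = (0, 1))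
    (hi : i ≤ m) (hp : ℓ p = (i, 1)) : G.BananaChain v {w | (ℓ w).1 ≤ i} p := by
  induction i generalizing p with
  | zero =>
    obtain rfl : p = v := h.bijOn.injOn (by simp) (by simp) (hp.trans hv.symm)
    have hroot : {p} = ({w | (ℓ w).1 ≤ 0} : Finset V) :=
      eq_of_subset_of_card_le (by simp [hp]) (h.card_filter_le hi).le
    exact hroot ▸ .root
  | succ i ih =>
    have hi' := (Nat.le_succ i).trans hi
    obtain ⟨p', hp'⟩ := h.exists_eq_one hi'
    simpa only [← filter_or, ← Nat.le_succ_iff] using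
      (ih hi' hp').step (h.isNextLevel hi' hp' hp)

theorem isQuasiBanana_iff : G.IsQuasiBanana ↔ ∃ v p, G.BananaChain v univ p := by
  constructor
  · rintro ⟨m, q, ℓ, hℓ⟩
    have h := isQBLabelling_iff.1 hℓ
    obtain ⟨v, hv⟩ := h.exists_eq_one m.zero_le
    obtain ⟨p, hp⟩ := h.exists_eq_one le_rfl
    have huniv : ({w | (ℓ w).1 ≤ m} : Finset V) = univ :=
      filter_true_of_mem fun w hw => h.fst_le hw
    exact ⟨v, p, huniv ▸ h.bananaChain hv le_rfl hp⟩
  · rintro ⟨v, p, h⟩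
    obtain ⟨m, q, ℓ, h, -⟩ := h.exists_isQBLabellingOn
    exact ⟨m, q, ℓ, isQBLabelling_iff.2 h⟩

end Labelling

end Multigraph

/-- A graph `G` is a quasi-banana graph if and only if it is gonality-tight
and there exists a vertex `v` such that the divisor `D = v + ∑_{w ∈ V(G)} w` realises the
second gonality of `G`. -/
theorem stmt0 (G : Multigraph V) (hG : G.Connected) :
    G.IsQuasiBanana ↔
      (G.GonalityTight ∧
        ∃ v : V, G.Realises 2 (fun w => (if w = v then 1 else 0) + 1)) := by
  have := hG.1
  simp only [← Multigraph.pile_singleton]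
  rw [Multigraph.gonalityTight_and_realises_iff, Multigraph.isQuasiBanana_iff]
  constructor
  · rintro ⟨v, p, h⟩
    exact ⟨h.gonality_one_eq hG, v, h.two_le_rank⟩
  · rintro ⟨hgon, v, hrank⟩
    exact ⟨v, Multigraph.exists_bananaChain_univ hG hgon hrank⟩
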